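/- For all integers n ≥ 2 and k ≥ 1, the numbers f_{111,112}(n,k) of words in [k]^n avoiding both patterns 111 and 112 satisfy the recurrence f_{111,112}(n,k) = f_{111,112}(n,k-1) + n · f_{111,112}(n-1,k-1) + (n-1) · f_{111,112}(n-2,k-1). -/

import Mathlib

/-- A word `σ ∈ [k]^n` (encoded as `σ : Fin n → Fin k`) contains the pattern `τ`
(encoded as a list of natural numbers) if there is a strictly increasing choice of
positions on which `σ` is order-isomorphic to `τ`. -/
def WordContains {n k : ℕ} (σ : Fin n → Fin k) (τ : List ℕ) : Prop :=
  ∃ f : Fin τ.length → Fin n, StrictMono f ∧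
    ∀ a b : Fin τ.length,
      (σ (f a) < σ (f b) ↔ τ.get a < τ.get b) ∧
      (σ (f a) = σ (f b) ↔ τ.get a = τ.get b)

/-- `avoiders n k T` is the number of words in `[k]^n` that avoid every pattern in `T`,
i.e. `f_T(n,k)`. -/
noncomputable def avoiders (n k : ℕ) (T : Set (List ℕ)) : ℕ :=
  Nat.card {σ : Fin n → Fin k // ∀ τ ∈ T, ¬ WordContains σ τ}

/-! A word avoids `111` and `112` exactly when every letter to the right of two equal letters is
smaller than them. Nothing is smaller than the smallest letter, so it is either absent, or present
once in an arbitrary position, or present twice with the second occurrence at the end of the word.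
Deleting its occurrences leaves an arbitrary avoiding word on the other `k - 1` letters, and the
position of the first occurrence is free; the three cases give the three summands. -/

theorem cmp_eq_cmp_iff {α β : Type*} [LinearOrder α] [LinearOrder β] {x y : α} {x' y' : β} :
    cmp x y = cmp x' y' ↔ (x < y ↔ x' < y') ∧ (x = y ↔ x' = y') := by
  simp only [cmp, cmpUsing]
  grind

section PatternContainment

variable {n k : ℕ} {σ : Fin n → Fin k}

theorem wordContains_iff_cmp {τ : List ℕ} :
    WordContains σ τ ↔ ∃ f : Fin τ.length → Fin n, StrictMono f ∧
      ∀ a b, a < b → cmp (σ (f a)) (σ (f b)) = cmp (τ.get a) (τ.get b) := by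
  simp only [WordContains, ← cmp_eq_cmp_iff]
  refine exists_congr fun f => and_congr_right fun _ => ⟨fun h a b _ => h a b, fun h a b => ?_⟩
  rcases lt_trichotomy a b with hab | rfl | hba
  · exact h a b hab
  · simp only [cmp_self_eq_eq]
  · exact cmp_eq_cmp_symm.1 (h b a hba)

theorem wordContains_triple_iff {a b c : ℕ} :
    WordContains σ [a, b, c] ↔ ∃ i j l, i < j ∧ j < l ∧
      cmp (σ i) (σ j) = cmp a b ∧ cmp (σ i) (σ l) = cmp a c ∧ cmp (σ j) (σ l) = cmp b c := by
  rw [wordContains_iff_cmp]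
  constructor
  · rintro ⟨f : Fin 3 → Fin n, hf, hcmp⟩
    have h₀₁ : (0 : Fin 3) < 1 := by decide
    have h₁₂ : (1 : Fin 3) < 2 := by decide
    exact ⟨f 0, f 1, f 2, hf h₀₁, hf h₁₂, hcmp 0 1 h₀₁, hcmp 0 2 (h₀₁.trans h₁₂), hcmp 1 2 h₁₂⟩
  · rintro ⟨i, j, l, hij, hjl, hcmp⟩
    refine ⟨(![i, j, l] : Fin 3 → Fin n), ?_, ?_⟩
    · simp [hij, hjl]
    · simpa [Fin.forall_fin_succ, and_assoc] using hcmp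

/-- The condition on words that expresses avoidance of `111` and `112`: every letter to the right
of two equal letters is smaller than them. -/
def RepeatDescends {ι α : Type*} [LT ι] [LT α] (σ : ι → α) : Prop :=
  ∀ ⦃i j l⦄, i < j → j < l → σ i = σ j → σ l < σ i

theorem avoids_111_112_iff_repeatDescends :
    (∀ τ ∈ ({[1, 1, 1], [1, 1, 2]} : Set (List ℕ)), ¬ WordContains σ τ) ↔ RepeatDescends σ := by
  have cmp_one_two : cmp 1 2 = Ordering.lt := rfl
  simp only [Set.mem_insert_iff, Set.mem_singleton_iff, forall_eq_or_imp, forall_eq,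
    wordContains_triple_iff, cmp_self_eq_eq, cmp_one_two, cmp_eq_eq_iff, cmp_eq_lt_iff]
  constructor
  · rintro ⟨h₁₁₁, h₁₁₂⟩ i j l hij hjl heq
    by_contra! hle
    rcases hle.eq_or_lt with hil | hil
    · exact h₁₁₁ ⟨i, j, l, hij, hjl, heq, hil, heq ▸ hil⟩
    · exact h₁₁₂ ⟨i, j, l, hij, hjl, heq, hil, heq ▸ hil⟩
  · intro h
    constructor
    · rintro ⟨i, j, l, hij, hjl, heq, hil, -⟩
      exact (h hij hjl heq).ne' hil
    · rintro ⟨i, j, l, hij, hjl, heq, hil, -⟩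
      exact (h hij hjl heq).asymm hil

end PatternContainment

theorem avoiders_111_112_eq_ncard (n k : ℕ) :
    avoiders n k {[1, 1, 1], [1, 1, 2]} = {σ : Fin n → Fin k | RepeatDescends σ}.ncard := by
  simp only [avoiders, avoids_111_112_iff_repeatDescends]
  rfl

section RepeatDescends

theorem repeatDescends_comp_iff {ι α β : Type*} [LT ι] [LinearOrder α] [Preorder β]
    {f : α → β} (hf : StrictMono f) {σ : ι → α} :
    RepeatDescends (f ∘ σ) ↔ RepeatDescends σ := by
  simp only [RepeatDescends, Function.comp_apply, hf.injective.eq_iff, hf.lt_iff_lt]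

variable {n : ℕ} {α : Type*} {σ : Fin n → α}

theorem repeatDescends_insertNth_iff [Preorder α] {p : Fin (n + 1)} {a : α} (ha : ∀ i, a < σ i) :
    RepeatDescends (p.insertNth a σ : Fin (n + 1) → α) ↔ RepeatDescends σ := by
  simp [RepeatDescends, Fin.forall_iff_succAbove p, (ha _).ne, (ha _).ne', ha]

theorem repeatDescends_snoc_iff [LT α] {a : α} :
    RepeatDescends (Fin.snoc σ a : Fin (n + 1) → α) ↔
      RepeatDescends σ ∧ ∀ ⦃i j⦄, i < j → σ i = σ j → a < σ i := by
  simp only [RepeatDescends, Fin.forall_iff_castSucc, Fin.snoc_castSucc, Fin.snoc_last,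
    Fin.castSucc_lt_castSucc_iff, Fin.castSucc_lt_last, (Fin.le_last _).not_gt]
  grind

theorem repeatDescends_snoc_and_nontrivial_iff [PartialOrder α] {m a : α} (hm : IsBot m) :
    RepeatDescends (Fin.snoc σ a : Fin (n + 1) → α) ∧
        ((Fin.snoc σ a : Fin (n + 1) → α) ⁻¹' {m}).Nontrivial ↔
      a = m ∧ RepeatDescends σ ∧ ∃! p, σ p = m := by
  rw [repeatDescends_snoc_iff]
  constructor
  · rintro ⟨⟨hσ, ha⟩, hnontrivial⟩
    have eq_of_eq_m {p q} (hp : σ p = m) (hq : σ q = m) : p = q := by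
      by_contra hpq
      rcases lt_or_gt_of_ne hpq with hlt | hlt
      · exact hm.isMin.not_lt (hp ▸ ha hlt (hp.trans hq.symm))
      · exact hm.isMin.not_lt (hq ▸ ha hlt (hq.trans hp.symm))
    obtain ⟨i, hi, j, hj, hij⟩ := Set.nontrivial_iff_exists_lt.1 hnontrivial
    obtain ⟨p, rfl⟩ := Fin.exists_castSucc_eq.2 (hij.trans_le (Fin.le_last j)).ne
    have hp : σ p = m := by simpa using hi
    refine ⟨?_, hσ, p, hp, fun q hq => eq_of_eq_m hq hp⟩
    cases j using Fin.lastCases with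
    | last => simpa using hj
    | cast q => exact absurd (eq_of_eq_m hp (by simpa using hj)) (by simpa using hij.ne)
  · rintro ⟨rfl, hσ, p, hp, hp_unique⟩
    refine ⟨⟨hσ, fun i j hij heq => (hm _).lt_of_ne' fun hi => ?_⟩, ?_⟩
    · exact hij.ne ((hp_unique i hi).trans (hp_unique j (heq.symm.trans hi)).symm)
    · exact ⟨p.castSucc, by simpa using hp, Fin.last n, by simp, (Fin.castSucc_lt_last p).ne⟩

end RepeatDescends

theorem exists_succ_comp_eq_iff {ι : Type*} {k : ℕ} {σ : ι → Fin (k + 1)} :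
    (∃ τ : ι → Fin k, Fin.succ ∘ τ = σ) ↔ ∀ i, σ i ≠ 0 := by
  simp only [eq_comm (b := σ), ← Set.range_subset_range_iff_exists_comp, Fin.range_succ,
    Set.range_subset_iff, Set.mem_compl_singleton_iff]

/-- The word obtained from `τ` by raising every letter by one and then inserting the new smallest
letter `0` so that it ends up at position `p`. -/
def insertZero {n k : ℕ} (p : Fin (n + 1)) (τ : Fin n → Fin k) : Fin (n + 1) → Fin (k + 1) :=
  p.insertNth 0 (Fin.succ ∘ τ)

section InsertZero

variable {n k : ℕ} {p : Fin (n + 1)}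

theorem insertZero_eq_zero_iff {τ : Fin n → Fin k} {i : Fin (n + 1)} :
    insertZero p τ i = 0 ↔ i = p := by
  cases i using p.succAboveCases <;> simp [insertZero, Fin.succAbove_ne]

theorem insertZero_injective2 : Function.Injective2 (insertZero (n := n) (k := k)) := by
  intro p q τ υ h
  obtain rfl : p = q := by rw [← insertZero_eq_zero_iff (τ := υ), ← h, insertZero_eq_zero_iff]
  exact ⟨rfl, (Fin.succ_injective k).comp_left (Fin.insertNth_right_injective _ h)⟩

theorem exists_insertZero_eq_iff {σ : Fin (n + 1) → Fin (k + 1)} :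
    (∃ τ : Fin n → Fin k, insertZero p τ = σ) ↔ ∀ i, σ i = 0 ↔ i = p := by
  simp only [insertZero, Fin.insertNth_eq_iff, exists_and_left, exists_succ_comp_eq_iff,
    Fin.forall_iff_succAbove p, Fin.removeNth_apply, Fin.succAbove_ne, iff_true, iff_false,
    eq_comm (a := (0 : Fin (k + 1))), ne_eq]

theorem repeatDescends_insertZero_iff {τ : Fin n → Fin k} :
    RepeatDescends (insertZero p τ) ↔ RepeatDescends τ :=
  (repeatDescends_insertNth_iff fun i => Fin.succ_pos (τ i)).trans
    (repeatDescends_comp_iff Fin.strictMono_succ)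

end InsertZero

theorem ncard_setOf_eq_add_by_occurrences {ι α : Type*} [Finite ι] [Finite α]
    (P : (ι → α) → Prop) (a : α) :
    {σ | P σ}.ncard = {σ | P σ ∧ ∀ i, σ i ≠ a}.ncard + {σ | P σ ∧ ∃! i, σ i = a}.ncard +
      {σ | P σ ∧ (σ ⁻¹' {a}).Nontrivial}.ncard := by
  have not_nontrivial_iff (σ : ι → α) :
      ¬ (σ ⁻¹' {a}).Nontrivial ↔ (∀ i, σ i ≠ a) ∨ ∃! i, σ i = a := by
    simp only [Set.Nontrivial, ExistsUnique, Set.mem_preimage, Set.mem_singleton_iff]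
    grind
  rw [← Set.ncard_union_eq, ← Set.ncard_union_eq]
  · congr 1 with σ
    have := not_nontrivial_iff σ
    simp only [Set.mem_ofPred_eq, Set.mem_union]
    tauto
  · refine Set.disjoint_left.2 ?_
    rintro σ (⟨-, hσ⟩ | ⟨-, hσ⟩) ⟨-, hnontrivial⟩
    · exact (not_nontrivial_iff σ).2 (.inl hσ) hnontrivial
    · exact (not_nontrivial_iff σ).2 (.inr hσ) hnontrivial
  · refine Set.disjoint_left.2 ?_
    rintro σ ⟨-, hne⟩ ⟨-, i, hi, -⟩
    exact hne i hi

theorem ncard_repeatDescends_forall_ne_zero (n k : ℕ) :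
    {σ : Fin n → Fin (k + 1) | RepeatDescends σ ∧ ∀ i, σ i ≠ 0}.ncard =
      {τ : Fin n → Fin k | RepeatDescends τ}.ncard := by
  rw [← Set.ncard_image_of_injective _ (Fin.succ_injective k).comp_left]
  congr 1 with σ
  simp only [← exists_succ_comp_eq_iff, Set.mem_ofPred_eq, Set.mem_image]
  constructor
  · rintro ⟨hσ, τ, rfl⟩
    exact ⟨τ, (repeatDescends_comp_iff Fin.strictMono_succ).1 hσ, rfl⟩
  · rintro ⟨τ, hτ, rfl⟩
    exact ⟨(repeatDescends_comp_iff Fin.strictMono_succ).2 hτ, τ, rfl⟩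

theorem ncard_repeatDescends_existsUnique_zero (n k : ℕ) :
    {σ : Fin (n + 1) → Fin (k + 1) | RepeatDescends σ ∧ ∃! p, σ p = 0}.ncard =
      (n + 1) * {τ : Fin n → Fin k | RepeatDescends τ}.ncard := by
  have eq_image : {σ : Fin (n + 1) → Fin (k + 1) | RepeatDescends σ ∧ ∃! p, σ p = 0} =
      Function.uncurry insertZero '' (Set.univ ×ˢ {τ : Fin n → Fin k | RepeatDescends τ}) := by
    ext σ
    constructor
    · rintro ⟨hσ, p, hp, hp_unique⟩
      obtain ⟨τ, rfl⟩ := exists_insertZero_eq_iff.2 fun i => ⟨hp_unique i, fun h => h ▸ hp⟩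
      exact ⟨(p, τ), ⟨trivial, repeatDescends_insertZero_iff.1 hσ⟩, rfl⟩
    · rintro ⟨⟨p, τ⟩, ⟨-, hτ⟩, rfl⟩
      exact ⟨repeatDescends_insertZero_iff.2 hτ, p, insertZero_eq_zero_iff.2 rfl,
        fun i => insertZero_eq_zero_iff.1⟩
  rw [eq_image, Set.ncard_image_of_injective _ insertZero_injective2.uncurry, Set.ncard_prod,
    Set.ncard_univ, Nat.card_fin]

theorem ncard_repeatDescends_nontrivial_zero (n k : ℕ) :
    {σ : Fin (n + 1) → Fin (k + 1) | RepeatDescends σ ∧ (σ ⁻¹' {0}).Nontrivial}.ncard =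
      {σ : Fin n → Fin (k + 1) | RepeatDescends σ ∧ ∃! p, σ p = 0}.ncard := by
  rw [← Set.ncard_image_of_injective {σ : Fin n → Fin (k + 1) | _}
    (Fin.snoc_left_injective (α := fun _ => Fin (k + 1)) 0)]
  congr 1 with σ
  cases σ using Fin.snocCases with
  | snoc σ a =>
    simp only [Set.mem_ofPred_eq, repeatDescends_snoc_and_nontrivial_iff Fin.zero_le,
      Set.mem_image, Fin.snoc_inj]
    grind

/-- f_{111,112}(n,k) = f_{111,112}(n,k-1) + n·f_{111,112}(n-1,k-1) + (n-1)·f_{111,112}(n-2,k-1)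
for n ≥ 2, k ≥ 1. -/
theorem avoid_111_112_recurrence (n k : ℕ) (hn : 2 ≤ n) (hk : 1 ≤ k) :
    avoiders n k {[1, 1, 1], [1, 1, 2]} =
      avoiders n (k - 1) {[1, 1, 1], [1, 1, 2]} +
        n * avoiders (n - 1) (k - 1) {[1, 1, 1], [1, 1, 2]} +
        (n - 1) * avoiders (n - 2) (k - 1) {[1, 1, 1], [1, 1, 2]} := by
  obtain ⟨n, rfl⟩ := Nat.exists_eq_add_of_le' hn
  obtain ⟨k, rfl⟩ := Nat.exists_eq_add_of_le' hk
  simp only [avoiders_111_112_eq_ncard, Nat.add_sub_cancel, Nat.add_succ_sub_one]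
  rw [ncard_setOf_eq_add_by_occurrences RepeatDescends 0, ncard_repeatDescends_nontrivial_zero,
    ncard_repeatDescends_forall_ne_zero, ncard_repeatDescends_existsUnique_zero,
    ncard_repeatDescends_existsUnique_zero]
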